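/- arXiv:2406.02375 — 8 statements merged into one kernel-verified Lean document; each statement's English description precedes it below -/
import Mathlib

section
/- Let A ⊆ B be a strictly separable ring extension. Then for every left B-module M, the projective dimension of M as a B-module equals the projective dimension of M as an A-module (via restriction of scalars): pd_B(M) = pd_A(M). -/
/-!
Statement 0: If `A ⊆ B` is a strictly separable ring extension, then for every left
`B`-module `M` one has `pd_B(M) = pd_A(M)` (where `M` is an `A`-module via restriction
of scalars).
-/

universe u

open TensorProduct

/-- `pdLE R n M` means that the left `R`-module `M` has projective dimension `≤ n`:
for `n = 0` this says that `M` is projective, and for `n+1` that `M` admits an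
epimorphism from a projective module whose kernel has projective dimension `≤ n`. -/
def pdLE (R : Type u) [Ring R] : ℕ → (M : Type u) → [AddCommGroup M] → [Module R M] → Prop
  | 0, M, _, _ => Module.Projective R M
  | n + 1, M, _, _ => ∃ (P : Type u) (_ : AddCommGroup P) (_ : Module R P) (g : P →ₗ[R] M),
      Module.Projective R P ∧ Function.Surjective g ∧ pdLE R n ↥(LinearMap.ker g)

/-- The projective dimension (in `ℕ∞`, with `⊤` meaning infinite projective dimension)
of a left `R`-module `M`. -/
noncomputable def projDim (R : Type u) [Ring R] (M : Type u) [AddCommGroup M]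
    [Module R M] : ℕ∞ :=
  sInf {d : ℕ∞ | ∃ n : ℕ, d = n ∧ pdLE R n M}

/-- The subgroup of `B ⊗_ℤ B` generated by the `A`-balancing relations; the quotient
of `B ⊗_ℤ B` by this subgroup is the tensor product `B ⊗_A B` (for the right/left
`A`-module structures on `B` induced by `f : A →+* B`). -/
noncomputable def balancedRel {A B : Type*} [Ring A] [Ring B] (f : A →+* B) :
    AddSubgroup (TensorProduct ℤ B B) :=
  AddSubgroup.closure
    {x | ∃ (b : B) (a : A) (b' : B), x = (b * f a) ⊗ₜ[ℤ] b' - b ⊗ₜ[ℤ] (f a * b')}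

/-- `B` is flat as a right `A`-module (via `f : A →+* B`), expressed by the standard
equational criterion for flatness (valid over arbitrary rings). -/
def RightFlat {A B : Type*} [Ring A] [Ring B] (f : A →+* B) : Prop :=
  ∀ (n : ℕ) (x : Fin n → B) (a : Fin n → A), (∑ i, x i * f (a i)) = 0 →
    ∃ (k : ℕ) (y : Fin k → B) (c : Fin k → Fin n → A),
      (∀ i, x i = ∑ j, y j * f (c j i)) ∧ ∀ j, (∑ i, c j i * a i) = 0

/-- A ring extension `f : A →+* B` is *strictly separable* if
(1) the multiplication map `B ⊗_A B → B` is a split epimorphism of `B`-bimodules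
    (equivalently, there is `w ∈ B ⊗_A B` with `μ(w) = 1` and `b·w = w·b` for all `b`;
    here elements of `B ⊗_A B` are represented by elements of `B ⊗_ℤ B` modulo
    `balancedRel f`),
(2) the inclusion `A → B` is a split monomorphism of `A`-bimodules, and
(3) `B` is projective as a left `A`-module and flat as a right `A`-module. -/
def StrictlySeparable {A B : Type*} [Ring A] [Ring B] (f : A →+* B) : Prop :=
  (∃ w : TensorProduct ℤ B B, LinearMap.mul' ℤ B w = 1 ∧ ∀ b : B,
      TensorProduct.map (LinearMap.mulLeft ℤ b) (LinearMap.id : B →ₗ[ℤ] B) w -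
        TensorProduct.map (LinearMap.id : B →ₗ[ℤ] B) (LinearMap.mulRight ℤ b) w
        ∈ balancedRel f) ∧
  (∃ π : B →+ A, (∀ a, π (f a) = a) ∧ (∀ (a : A) (b : B), π (f a * b) = a * π b) ∧
      (∀ (a : A) (b : B), π (b * f a) = π b * a)) ∧
  (letI : Module A B := Module.compHom B f; Module.Projective A B) ∧
  RightFlat f

open CategoryTheory in
theorem shortExact_pd {R : Type u} [Ring R] {K P M : Type u} [AddCommGroup K] [Module R K]
    [AddCommGroup P] [Module R P] [AddCommGroup M] [Module R M] (i : K →ₗ[R] P) (g : P →ₗ[R] M)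
    (hP : Module.Projective R P) (hi : Function.Injective i) (hg : Function.Surjective g)
    (hex : Function.Exact i g) (n : ℕ) :
    HasProjectiveDimensionLT (ModuleCat.of R M) (n + 2) ↔
      HasProjectiveDimensionLT (ModuleCat.of R K) (n + 1) := by
  let S : ShortComplex (ModuleCat.{u} R) :=
    ShortComplex.mk (ModuleCat.ofHom i) (ModuleCat.ofHom g)
      (by ext x; exact hex.apply_apply_eq_zero x)
  have hS : S.ShortExact :=
    { exact := (ShortComplex.ShortExact.moduleCat_exact_iff_function_exact S).mpr hex
      mono_f := (ModuleCat.mono_iff_injective _).mpr hi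
      epi_g := (ModuleCat.epi_iff_surjective _).mpr hg }
  exact hS.hasProjectiveDimensionLT_X₃_iff n ((IsProjective.iff_projective P).mp hP)

open CategoryTheory in
theorem pdLE_iff {R : Type u} [Ring R] (n : ℕ) : ∀ (M : Type u) [AddCommGroup M] [Module R M],
    pdLE R n M ↔ HasProjectiveDimensionLT (ModuleCat.of R M) (n + 1) := by
  induction n with
  | zero =>
    intro M _ _
    rw [pdLE, IsProjective.iff_projective, projective_iff_hasProjectiveDimensionLT_one]
  | succ n ih =>
    intro M _ _
    rw [pdLE]
    constructor
    · rintro ⟨P, _, _, g, hP, hg, hk⟩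
      exact (shortExact_pd (LinearMap.ker g).subtype g hP (Submodule.injective_subtype _) hg
        (LinearMap.exact_subtype_ker_map g) n).mpr ((ih _).mp hk)
    · intro h
      have hg : Function.Surjective (Finsupp.linearCombination R (id : M → M)) :=
        Finsupp.linearCombination_id_surjective R M
      refine ⟨M →₀ R, inferInstance, inferInstance, Finsupp.linearCombination R (id : M → M),
        inferInstance, hg, (ih _).mpr ?_⟩
      exact (shortExact_pd (LinearMap.ker _).subtype _ inferInstance
        (Submodule.injective_subtype _) hg (LinearMap.exact_subtype_ker_map _) n).mp h

theorem pdLE_succ_iff {R : Type u} [Ring R] {K P M : Type u} [AddCommGroup K] [Module R K]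
    [AddCommGroup P] [Module R P] [AddCommGroup M] [Module R M] (i : K →ₗ[R] P) (g : P →ₗ[R] M)
    (hP : Module.Projective R P) (hi : Function.Injective i) (hg : Function.Surjective g)
    (hex : Function.Exact i g) (n : ℕ) : pdLE R (n + 1) M ↔ pdLE R n K := by
  rw [pdLE_iff, pdLE_iff]
  exact shortExact_pd i g hP hi hg hex n

/-- restriction of a linear map along `f` -/
def restr {A B : Type u} [Ring A] [Ring B] (f : A →+* B) {M N : Type u}
    [AddCommGroup M] [Module B M] [AddCommGroup N] [Module B N]
    [Module A M] [Module A N]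
    (hM : ∀ (a : A) (m : M), a • m = f a • m) (hN : ∀ (a : A) (m : N), a • m = f a • m)
    (g : M →ₗ[B] N) : M →ₗ[A] N where
  toFun := g
  map_add' := g.map_add
  map_smul' a m := by simp [hM, hN]

theorem proj_restrict {A B : Type u} [Ring A] [Ring B] (f : A →+* B)
    (hB : letI : Module A B := Module.compHom B f; Module.Projective A B)
    (P : Type u) [AddCommGroup P] [Module B P] [Module A P]
    (hP : ∀ (a : A) (m : P), a • m = f a • m) (h : Module.Projective B P) :
    Module.Projective A P := by
  letI : Module A B := Module.compHom B f
  haveI : Module.Projective A B := hB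
  obtain ⟨s, hs⟩ := Module.projective_def'.mp h
  have hF : ∀ (a : A) (m : P →₀ B), a • m = f a • m := fun a m => by ext x; rfl
  classical
  have : Module.Projective A (P →₀ B) :=
    Module.Projective.of_equiv' (finsuppLequivDFinsupp (ι := P) (M := B) A).symm
  refine Module.Projective.of_split (restr f hP hF s)
    (restr f hF hP (Finsupp.linearCombination B id)) ?_
  ext x
  exact LinearMap.congr_fun hs x

theorem proj_lift {A B : Type u} [Ring A] [Ring B] (f : A →+* B)
    (hw : ∃ w : TensorProduct ℤ B B, LinearMap.mul' ℤ B w = 1 ∧ ∀ b : B,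
      TensorProduct.map (LinearMap.mulLeft ℤ b) (LinearMap.id : B →ₗ[ℤ] B) w -
        TensorProduct.map (LinearMap.id : B →ₗ[ℤ] B) (LinearMap.mulRight ℤ b) w
        ∈ balancedRel f)
    (P : Type u) [AddCommGroup P] [Module B P] [Module A P]
    (hP : ∀ (a : A) (m : P), a • m = f a • m) (h : Module.Projective A P) :
    Module.Projective B P := by
  obtain ⟨w, hw1, hw2⟩ := hw
  letI : Module A (P →₀ B) := Module.compHom (P →₀ B) f
  have hF : ∀ (a : A) (m : P →₀ B), a • m = f a • m := fun a m => rfl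
  let g := Finsupp.linearCombination B (id : P → P)
  have hg : Function.Surjective g := Finsupp.linearCombination_id_surjective B P
  obtain ⟨s, hs⟩ := Module.projective_lifting_property (restr f hF hP g) LinearMap.id hg
  have hs : ∀ m, g (s m) = m := fun m => LinearMap.congr_fun hs m
  let Φ : P → TensorProduct ℤ B B →ₗ[ℤ] (P →₀ B) := fun m =>
    TensorProduct.lift (LinearMap.mk₂ ℤ (fun x y => x • s (y • m))
      (fun x x' y => add_smul _ _ _) (fun c x y => smul_assoc _ _ _)
      (fun x y y' => by rw [add_smul, map_add, smul_add])
      (fun c x y => by rw [smul_assoc, map_zsmul, smul_comm]))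
  have hΦ : ∀ m x y, Φ m (x ⊗ₜ y) = x • s (y • m) := fun m x y => rfl
  have hbal : ∀ m, ∀ t ∈ balancedRel f, Φ m t = 0 := by
    intro m t ht
    induction ht using AddSubgroup.closure_induction with
    | mem x hx =>
      obtain ⟨b, a, b', rfl⟩ := hx
      rw [map_sub, hΦ, hΦ, mul_smul, mul_smul, ← hF, ← hP, s.map_smul, sub_self]
    | zero => simp
    | add x y _ _ hx hy => rw [map_add, hx, hy, add_zero]
    | neg x _ hx => rw [map_neg, hx, neg_zero]
  have h1 : ∀ m b t, Φ m (TensorProduct.map (LinearMap.mulLeft ℤ b) LinearMap.id t)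
      = b • Φ m t := by
    intro m b t
    induction t with
    | zero => simp
    | tmul x y => simp [hΦ, mul_smul]
    | add x y hx hy => rw [map_add, map_add, hx, hy, map_add, smul_add]
  have h2 : ∀ m b t, Φ m (TensorProduct.map LinearMap.id (LinearMap.mulRight ℤ b) t)
      = Φ (b • m) t := by
    intro m b t
    induction t with
    | zero => simp
    | tmul x y => simp [hΦ, mul_smul]
    | add x y hx hy => rw [map_add, map_add, hx, hy, map_add]
  have h3 : ∀ m m' t, Φ (m + m') t = Φ m t + Φ m' t := by
    intro m m' t
    induction t with
    | zero => simp
    | tmul x y => simp [hΦ]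
    | add x y hx hy => rw [map_add, hx, hy, map_add, map_add]; abel
  have h4 : ∀ m t, g (Φ m t) = LinearMap.mul' ℤ B t • m := by
    intro m t
    induction t with
    | zero => simp
    | tmul x y => rw [hΦ, map_smul, hs]; simp [mul_smul]
    | add x y hx hy => rw [map_add, map_add, hx, hy, map_add, add_smul]
  let s' : P →ₗ[B] (P →₀ B) :=
    { toFun := fun m => Φ m w
      map_add' := fun m m' => h3 m m' w
      map_smul' := fun b m => by
        have := hbal m _ (hw2 b)
        rw [map_sub, h1, h2, sub_eq_zero] at this
        exact this.symm }
  refine Module.Projective.of_split s' g ?_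
  ext m
  exact (h4 m w).trans (by rw [hw1, one_smul]; rfl)

theorem pdLE_base_iff {A B : Type u} [Ring A] [Ring B] (f : A →+* B)
    (hsep : StrictlySeparable f) (n : ℕ) : ∀ (M : Type u) [AddCommGroup M] [Module B M]
    [Module A M] (_ : ∀ (a : A) (m : M), a • m = f a • m), pdLE B n M ↔ pdLE A n M := by
  obtain ⟨hw, -, hB, -⟩ := hsep
  induction n with
  | zero =>
    intro M _ _ _ hM
    exact ⟨proj_restrict f hB M hM, proj_lift f hw M hM⟩
  | succ n ih =>
    intro M _ _ _ hM
    letI : Module A (M →₀ B) := Module.compHom (M →₀ B) f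
    have hF : ∀ (a : A) (m : M →₀ B), a • m = f a • m := fun a m => rfl
    let g := Finsupp.linearCombination B (id : M → M)
    have hg : Function.Surjective g := Finsupp.linearCombination_id_surjective B M
    letI : Module A (LinearMap.ker g) := Module.compHom (LinearMap.ker g) f
    have hK : ∀ (a : A) (m : LinearMap.ker g), a • m = f a • m := fun a m => rfl
    have e1 : pdLE B (n + 1) M ↔ pdLE B n (LinearMap.ker g) :=
      pdLE_succ_iff (K := LinearMap.ker g) (LinearMap.ker g).subtype g inferInstance
        (Submodule.injective_subtype _) hg (LinearMap.exact_subtype_ker_map g) n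
    let i : LinearMap.ker g →ₗ[A] (M →₀ B) :=
      restr (M := LinearMap.ker g) f hK hF (LinearMap.ker g).subtype
    have e2 : pdLE A (n + 1) M ↔ pdLE A n (LinearMap.ker g) :=
      pdLE_succ_iff i (restr f hF hM g)
        (proj_restrict f hB _ hF inferInstance)
        (LinearMap.ker g).injective_subtype hg (LinearMap.exact_subtype_ker_map g) n
    rw [e1, e2]
    exact ih _ hK

/-- For a strictly separable ring extension `A ⊆ B` and any left
`B`-module `M`, the projective dimension of `M` over `B` equals its projective
dimension over `A` (via restriction of scalars along `f`). -/
theorem projDim_eq_of_strictlySeparable {A B : Type u} [Ring A] [Ring B] (f : A →+* B)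
    (hsep : StrictlySeparable f) (M : Type u) [AddCommGroup M] [Module B M] :
    letI : Module A M := Module.compHom M f
    projDim B M = projDim A M := by
  letI : Module A M := Module.compHom M f
  change projDim B M = projDim A M
  unfold projDim
  simp only [pdLE_base_iff f hsep _ M (fun _ _ => rfl)]
end

section
/- Let A be a ring, G a finite group of order n acting on A via a datum (φ, ω), and suppose n is invertible in A. Let B = A[G,(φ,ω)] be the crossed product and μ : B ⊗_A B → B the multiplication map. Then the element w := n⁻¹ · Σ_{g ∈ G} ω_{g,g⁻¹}⁻¹ [g] ⊗ [g⁻¹] ∈ B ⊗_A B satisfies μ(w) = 1 and b·w = w·b for all b ∈ B. -/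
/-!
Statement 3: Let `G` be a finite group of order `n` acting on a ring `A` via a datum
`(φ, ω)`, with `n` invertible in `A`, and let `B = A[G, (φ, ω)]` be the crossed
product.  Then the element `w = n⁻¹ · Σ_g ω_{g,g⁻¹}⁻¹ [g] ⊗ [g⁻¹] ∈ B ⊗_A B`
satisfies `μ(w) = 1` and `b·w = w·b` for all `b ∈ B`.  Here `B ⊗_A B` is realized as
the quotient of `B ⊗_ℤ B` by the `A`-balancing relations, so the centrality equation
`b·w = w·b` reads: the difference of the two sides, computed in `B ⊗_ℤ B`, lies in
the subgroup of balancing relations.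
-/

universe u v w

open TensorProduct

/-- An action of a group `G` on a ring `A` via a pair `(φ, ω)` consisting of a map
`φ : G → Aut(A)` and a normed two-cocycle `ω : G × G → Aˣ`, satisfying the usual
compatibility conditions of a crossed system (Reiten–Riedtmann). -/
structure CrossedSystem (A : Type u) [Ring A] (G : Type v) [Group G] where
  /-- The action of `G` on `A` by ring automorphisms. -/
  φ : G → A ≃+* A
  /-- The system of factors (a normed two-cocycle with values in `Aˣ`). -/
  ω : G → G → Aˣ
  compat : ∀ (g₁ g₂ : G) (a : A),
    φ g₁ (φ g₂ a) = (ω g₁ g₂ : A) * φ (g₁ * g₂) a * ((ω g₁ g₂)⁻¹ : Aˣ)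
  φ_one : φ 1 = RingEquiv.refl A
  ω_one_right : ∀ g : G, ω g 1 = 1
  ω_one_left : ∀ g : G, ω 1 g = 1
  cocycle : ∀ g g' g'' : G,
    φ g (ω g' g'' : A) * (ω g (g' * g'') : A) = (ω g g' : A) * (ω (g * g') g'' : A)

/-- `IsCrossedProduct D B ι u` says that the ring `B`, together with the embedding
`ι : A →+* B` and the units `u g = [g]`, realizes the crossed product
`A[G, (φ, ω)]`: it is a free left `A`-module with basis `([g])_{g ∈ G}`, with
`[e] = 1`, `[g] · a = φ_g(a) · [g]` and `[f] · [g] = ω_{f,g} [f·g]`, which encodes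
the multiplication rule `a[f] · b[g] = a φ_f(b) ω_{f,g} [fg]`. -/
structure IsCrossedProduct {A : Type u} [Ring A] {G : Type v} [Group G] [Fintype G]
    (D : CrossedSystem A G) (B : Type w) [Ring B] (ι : A →+* B) (u : G → Bˣ) :
    Prop where
  u_one : (u 1 : B) = 1
  u_comm : ∀ (g : G) (a : A), (u g : B) * ι a = ι (D.φ g a) * u g
  u_mul : ∀ f g : G, (u f : B) * u g = ι (D.ω f g) * u (f * g)
  free : ∀ b : B, ∃! c : G → A, b = ∑ g : G, ι (c g) * u g

/-- Let `G` be a finite group of order `n` acting on the ring `A`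
via the datum `(φ, ω)`, with `n` invertible in `A`, and let `B = A[G, (φ, ω)]` be
the crossed product.  Then
`w := n⁻¹ Σ_{g ∈ G} ω_{g,g⁻¹}⁻¹ [g] ⊗ [g⁻¹] ∈ B ⊗_A B`
satisfies `μ(w) = 1` and `b·w = w·b` for every `b ∈ B` (the latter equality holding
in `B ⊗_A B`, i.e. modulo the balancing relations). -/
theorem crossedProduct_separability_element
    {A : Type u} [Ring A] {G : Type v} [Group G] [Fintype G]
    (D : CrossedSystem A G) (B : Type w) [Ring B] (ι : A →+* B) (u : G → Bˣ)
    (hB : IsCrossedProduct D B ι u) (hn : IsUnit ((Fintype.card G : ℕ) : A)) :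
    let w : TensorProduct ℤ B B :=
      ∑ g : G, (ι (↑hn.unit⁻¹ : A) * ι ((D.ω g g⁻¹)⁻¹ : Aˣ) * (u g : B)) ⊗ₜ[ℤ] ((u g⁻¹ : B))
    LinearMap.mul' ℤ B w = 1 ∧
      ∀ b : B,
        TensorProduct.map (LinearMap.mulLeft ℤ b) (LinearMap.id : B →ₗ[ℤ] B) w -
          TensorProduct.map (LinearMap.id : B →ₗ[ℤ] B) (LinearMap.mulRight ℤ b) w
          ∈ balancedRel ι := by
  intro w
  have hinv : ∀ g : G, ι ((D.ω g g⁻¹)⁻¹ : Aˣ) * (u g : B) = ((u g⁻¹)⁻¹ : Bˣ) := by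
    intro g
    have h1 : ι ((D.ω g g⁻¹)⁻¹ : Aˣ) * (u g : B) * (u g⁻¹ : B) = 1 := by
      rw [mul_assoc, hB.u_mul, mul_inv_cancel, hB.u_one, mul_one, ← map_mul, Units.inv_mul,
        map_one]
    exact Units.eq_inv_of_mul_eq_one_right h1
  obtain ⟨N, hN⟩ : ∃ N, N = ι (↑hn.unit⁻¹ : A) := ⟨_, rfl⟩
  have hN1 : N * (Fintype.card G : B) = 1 := by
    rw [hN, ← map_natCast ι, ← map_mul, IsUnit.val_inv_mul, map_one]
  have hN2 : (Fintype.card G : B) * N = 1 := by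
    rw [hN, ← map_natCast ι, ← map_mul, IsUnit.mul_val_inv, map_one]
  have hNc : ∀ b : B, b * N = N * b := by
    intro b
    calc b * N = N * (Fintype.card G : B) * b * N := by rw [hN1, one_mul]
      _ = N * (b * (Fintype.card G : B)) * N := by
        rw [mul_assoc N, Nat.cast_comm]
      _ = N * b := by rw [mul_assoc, mul_assoc, hN2, mul_one]
  have hw : w = ∑ h : G, (N * ((u h)⁻¹ : Bˣ)) ⊗ₜ[ℤ] (u h : B) := by
    rw [← Equiv.sum_comp (Equiv.inv G)]
    refine Finset.sum_congr rfl fun g _ => ?_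
    rw [mul_assoc, hinv, ← hN]
    rfl
  clear_value w
  subst hw
  refine ⟨?_, fun b => ?_⟩
  · simp only [map_sum, LinearMap.mul'_apply, mul_assoc, Units.inv_mul, mul_one,
      Finset.sum_const, Finset.card_univ, nsmul_eq_mul]
    exact hN2
  · simp only [map_sum, TensorProduct.map_tmul, LinearMap.mulLeft_apply, LinearMap.id_apply,
      LinearMap.mulRight_apply]
    obtain ⟨c, hc, -⟩ := hB.free b
    rw [hc]
    refine Finset.sum_induction _ (fun b : B =>
      (∑ h : G, (b * (N * ((u h)⁻¹ : Bˣ))) ⊗ₜ[ℤ] (u h : B)) -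
        ∑ h : G, (N * ((u h)⁻¹ : Bˣ)) ⊗ₜ[ℤ] ((u h : B) * b) ∈ balancedRel ι) ?_ ?_ ?_
    · intro x y hx hy
      have := add_mem hx hy
      simp only [add_mul, mul_add, TensorProduct.add_tmul, TensorProduct.tmul_add,
        Finset.sum_add_distrib]
      convert this using 1
      abel
    · simp [zero_mem]
    · intro k _
      generalize c k = a
      rw [← Equiv.sum_comp (Equiv.mulRight k), ← Finset.sum_sub_distrib]
      refine sum_mem fun h _ => AddSubgroup.subset_closure
        ⟨N * ((u h)⁻¹ : Bˣ), D.φ h a * D.ω h k, (u (h * k) : B), ?_⟩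
      have e : (u h : B) * (ι a * u k) = ι (D.φ h a * D.ω h k) * u (h * k) := by
        rw [← mul_assoc, hB.u_comm, mul_assoc, hB.u_mul, map_mul, mul_assoc]
      rw [← e]
      have e2 : ι (D.φ h a * D.ω h k) = (u h : B) * (ι a * u k) * ((u (h * k))⁻¹ : Bˣ) := by
        rw [e, mul_assoc, Units.mul_inv, mul_one]
      rw [e2]
      congr 2
      simp only [Equiv.coe_mulRight]
      rw [← mul_assoc (ι a * _), hNc, mul_assoc N, mul_assoc N, mul_assoc (u h : B),
        Units.inv_mul_cancel_left]
end

section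
/- Let A be a ring and G a finite group acting on A via a datum (φ, ω). Assume that n := |G| is invertible in A. Then the ring extension A ⊆ A[G,(φ,ω)] is strictly separable. -/
/-!
Statement 4: Let `A` be a ring and `G` a finite group acting on `A` via a datum
`(φ, ω)`.  If `n := |G|` is invertible in `A`, then the ring extension
`A ⊆ A[G, (φ, ω)]` is strictly separable.
-/

universe u v w

open TensorProduct

theorem crossed_inj {A : Type u} [Ring A] {G : Type v} [Group G] [Fintype G]
    {D : CrossedSystem A G} {B : Type w} [Ring B] {ι : A →+* B} {u : G → Bˣ}
    (hB : IsCrossedProduct D B ι u) (c d : G → A)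
    (h : ∑ g : G, ι (c g) * (u g : B) = ∑ g : G, ι (d g) * (u g : B)) : c = d :=
  (hB.free (∑ g : G, ι (c g) * (u g : B))).unique rfl h

theorem crossed_coord {A : Type u} [Ring A] {G : Type v} [Group G] [Fintype G]
    {D : CrossedSystem A G} {B : Type w} [Ring B] {ι : A →+* B} {u : G → Bˣ}
    (hB : IsCrossedProduct D B ι u) :
    ∃ κ : B → G → A, (∀ b, b = ∑ g : G, ι (κ b g) * (u g : B)) ∧
      (∀ c : G → A, κ (∑ g : G, ι (c g) * (u g : B)) = c) := by
  choose κ h1 _ using hB.free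
  exact ⟨κ, h1, fun c => (crossed_inj hB _ _ (h1 _)).symm⟩

theorem crossed_sep {A : Type u} [Ring A] {G : Type v} [Group G] [Fintype G]
    {D : CrossedSystem A G} {B : Type w} [Ring B] {ι : A →+* B} {u : G → Bˣ}
    (hB : IsCrossedProduct D B ι u) (hn : IsUnit ((Fintype.card G : ℕ) : A)) :
    ∃ w : TensorProduct ℤ B B, LinearMap.mul' ℤ B w = 1 ∧ ∀ b : B,
      TensorProduct.map (LinearMap.mulLeft ℤ b) (LinearMap.id : B →ₗ[ℤ] B) w -
        TensorProduct.map (LinearMap.id : B →ₗ[ℤ] B) (LinearMap.mulRight ℤ b) w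
        ∈ balancedRel ι := by
  have hn' : IsUnit ((Fintype.card G : ℕ) : B) := by simpa using hn.map ι
  obtain ⟨z, hz⟩ := hn'
  have zc : ∀ b : B, ((z⁻¹ : Bˣ) : B) * b = b * ((z⁻¹ : Bˣ) : B) := fun b => by
    have : Commute (z : B) b := hz ▸ Nat.cast_commute _ b
    exact this.units_inv_left
  refine ⟨∑ g : G, (((z⁻¹ : Bˣ) : B) * u g) ⊗ₜ[ℤ] (((u g)⁻¹ : Bˣ) : B), ?_, ?_⟩
  · simp [mul_assoc, ← hz]
  · intro b
    obtain ⟨c, hc, -⟩ := hB.free b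
    have key : ∀ (h : G) (a : A),
      TensorProduct.map (LinearMap.mulLeft ℤ (ι a * (u h : B))) (LinearMap.id : B →ₗ[ℤ] B)
        (∑ g : G, (((z⁻¹ : Bˣ) : B) * u g) ⊗ₜ[ℤ] (((u g)⁻¹ : Bˣ) : B)) -
        TensorProduct.map (LinearMap.id : B →ₗ[ℤ] B) (LinearMap.mulRight ℤ (ι a * (u h : B)))
        (∑ g : G, (((z⁻¹ : Bˣ) : B) * u g) ⊗ₜ[ℤ] (((u g)⁻¹ : Bˣ) : B))
        ∈ balancedRel ι := by
      intro h a
      simp only [map_sum, TensorProduct.map_tmul, LinearMap.mulLeft_apply,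
        LinearMap.mulRight_apply, LinearMap.id_apply]
      rw [← Equiv.sum_comp (Equiv.mulLeft h)
        (fun g => (((z⁻¹ : Bˣ) : B) * u g) ⊗ₜ[ℤ] ((((u g)⁻¹ : Bˣ) : B) * (ι a * (u h : B)))),
        ← Finset.sum_sub_distrib]
      refine AddSubgroup.sum_mem _ fun g _ => AddSubgroup.subset_closure ?_
      have e : ι a * (u h : B) * u g = u (h * g) * ι ((D.φ (h * g)).symm (a * D.ω h g)) := by
        rw [hB.u_comm, RingEquiv.apply_symm_apply, mul_assoc, hB.u_mul, map_mul, mul_assoc]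
      refine ⟨((z⁻¹ : Bˣ) : B) * u (h * g), (D.φ (h * g)).symm (a * D.ω h g),
        (((u g)⁻¹ : Bˣ) : B), ?_⟩
      have e1 : ι a * (u h : B) * (((z⁻¹ : Bˣ) : B) * u g)
          = ((z⁻¹ : Bˣ) : B) * u (h * g) * ι ((D.φ (h * g)).symm (a * D.ω h g)) := by
        rw [← mul_assoc, ← zc, mul_assoc, e, mul_assoc]
      have e2 : (((u (h * g))⁻¹ : Bˣ) : B) * (ι a * (u h : B))
          = ι ((D.φ (h * g)).symm (a * D.ω h g)) * (((u g)⁻¹ : Bˣ) : B) := by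
        rw [Units.eq_mul_inv_iff_mul_eq, mul_assoc, e, Units.inv_mul_cancel_left]
      rw [e1]
      simp only [Equiv.coe_mulLeft]
      rw [e2]
    have add : ∀ (s : Finset G) (t : TensorProduct ℤ B B),
        TensorProduct.map (LinearMap.mulLeft ℤ (∑ g ∈ s, ι (c g) * (u g : B)))
          (LinearMap.id : B →ₗ[ℤ] B) t -
        TensorProduct.map (LinearMap.id : B →ₗ[ℤ] B)
          (LinearMap.mulRight ℤ (∑ g ∈ s, ι (c g) * (u g : B))) t
        = ∑ g ∈ s, (TensorProduct.map (LinearMap.mulLeft ℤ (ι (c g) * (u g : B)))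
          (LinearMap.id : B →ₗ[ℤ] B) t -
        TensorProduct.map (LinearMap.id : B →ₗ[ℤ] B)
          (LinearMap.mulRight ℤ (ι (c g) * (u g : B))) t) := by
      intro s t
      induction t using TensorProduct.induction_on with
      | zero => simp
      | tmul x y =>
        simp only [TensorProduct.map_tmul, LinearMap.mulLeft_apply,
          LinearMap.mulRight_apply, LinearMap.id_apply, Finset.sum_mul, Finset.mul_sum,
          TensorProduct.sum_tmul, TensorProduct.tmul_sum, Finset.sum_sub_distrib]
      | add x y hx hy =>
        simp only [map_add, add_sub_add_comm, hx, hy, Finset.sum_add_distrib]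
    rw [hc, add]
    exact AddSubgroup.sum_mem _ fun g _ => key g (c g)

/-- If the finite group `G` acts on the ring `A` via the datum
`(φ, ω)` and `|G|` is invertible in `A`, then the extension of `A` by the crossed
product `A[G, (φ, ω)]` is strictly separable. -/
theorem strictlySeparable_crossedProduct
    {A : Type u} [Ring A] {G : Type v} [Group G] [Fintype G]
    (D : CrossedSystem A G) (B : Type w) [Ring B] (ι : A →+* B) (u : G → Bˣ)
    (hB : IsCrossedProduct D B ι u) (hn : IsUnit ((Fintype.card G : ℕ) : A)) :
    StrictlySeparable ι := by
  classical
  obtain ⟨κ, h1, h2⟩ := crossed_coord hB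
  have kadd : ∀ b b', κ (b + b') = κ b + κ b' := by
    intro b b'
    rw [← h2 (κ b + κ b')]
    congr 1
    conv_lhs => rw [h1 b, h1 b']
    simp [add_mul, Finset.sum_add_distrib]
  have kl : ∀ a b, κ (ι a * b) = fun g => a * κ b g := by
    intro a b
    rw [← h2 (fun g => a * κ b g)]
    congr 1
    conv_lhs => rw [h1 b]
    simp [Finset.mul_sum, mul_assoc]
  have kr : ∀ a b, κ (b * ι a) = fun g => κ b g * D.φ g a := by
    intro a b
    rw [← h2 (fun g => κ b g * D.φ g a)]
    congr 1
    conv_lhs => rw [h1 b]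
    simp [Finset.sum_mul, mul_assoc, hB.u_comm]
  have k1 : κ 1 1 = 1 := by
    have : (1 : B) = ∑ g : G, ι ((Pi.single 1 1 : G → A) g) * (u g : B) := by
      rw [Finset.sum_eq_single 1]
      · simp [hB.u_one]
      · intro g _ hg
        simp [hg]
      · simp
    rw [this, h2]
    simp
  have k0 : κ 0 = 0 := by simpa using kadd 0 0
  refine ⟨crossed_sep hB hn, ?_, ?_, ?_⟩
  · refine ⟨⟨⟨fun b => κ b 1, by simp [k0]⟩, fun b b' => by simp [kadd]⟩, ?_, ?_, ?_⟩
    · intro a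
      have := congrFun (kl a 1) 1
      simpa [k1] using this
    · intro a b
      simp [kl]
    · intro a b
      simp [kr, D.φ_one]
  · letI : Module A B := Module.compHom B ι
    let e : B ≃ₗ[A] (G → A) :=
      { toFun := κ
        invFun := fun c => ∑ g : G, ι (c g) * (u g : B)
        map_add' := kadd
        map_smul' := fun a b => kl a b
        left_inv := fun b => (h1 b).symm
        right_inv := h2 }
    exact Module.Projective.of_equiv e.symm
  · intro n x a hx
    let f := Fintype.equivFin G
    refine ⟨Fintype.card G, fun j => u (f.symm j),
      fun j i => (D.φ (f.symm j)).symm (κ (x i) (f.symm j)), ?_, ?_⟩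
    · intro i
      simp only [hB.u_comm, RingEquiv.apply_symm_apply]
      rw [Equiv.sum_comp f.symm (fun g => ι (κ (x i) g) * (u g : B))]
      exact h1 _
    · intro j
      apply (D.φ (f.symm j)).injective
      simp only [map_sum, map_mul, RingEquiv.apply_symm_apply, map_zero]
      let K : B →+ (G → A) := ⟨⟨κ, k0⟩, kadd⟩
      have h3 : K (∑ i, x i * ι (a i)) = 0 := by rw [hx, map_zero]
      rw [map_sum] at h3
      have h4 := congrFun h3 (f.symm j)
      simpa [K, kr] using h4
end

section
/- Let A be a ring and G a finite group acting on A via a datum (φ, ω), with |G| invertible in A. Then A is semi-simple if and only if the crossed product A[G,(φ,ω)] is semi-simple. -/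
/-!
Statement 5: For a finite group `G` acting on a ring `A` via a datum `(φ, ω)` with
`|G|` invertible in `A`, the ring `A` is semi-simple if and only if the crossed
product `A[G, (φ, ω)]` is semi-simple.
-/

universe u v w

theorem cp_fwd
    {A : Type u} [Ring A] {G : Type v} [Group G] [Fintype G]
    (D : CrossedSystem A G) (B : Type w) [Ring B] (ι : A →+* B) (u : G → Bˣ)
    (hB : IsCrossedProduct D B ι u) (hn : IsUnit ((Fintype.card G : ℕ) : A))
    (hA : IsSemisimpleRing A) : IsSemisimpleRing B := by
  let _ : Module A B := Module.compHom B ι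
  have hsm : ∀ (a : A) (b : B), a • b = ι a * b := fun a b => rfl
  obtain ⟨n, hn'⟩ : IsUnit ((Fintype.card G : ℕ) : B) := by
    simpa using hn.map ι
  have hnc : ∀ b : B, (↑n⁻¹ : B) * b = b * (↑n⁻¹ : B) := by
    intro b
    have h : Commute (n : B) b := by rw [hn']; exact Nat.cast_commute _ _
    exact (Commute.units_inv_left h).eq
  have hss : IsSemisimpleModule A B := inferInstance
  refine (isSemisimpleModule_iff B B).mpr ⟨fun N => ?_⟩
  let N' : Submodule A B :=
    { carrier := N
      add_mem' := N.add_mem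
      zero_mem' := N.zero_mem
      smul_mem' := fun a x hx => N.smul_mem (ι a) hx }
  obtain ⟨K, hK⟩ := exists_isCompl N'
  obtain ⟨p, hpN, hpid⟩ : ∃ p : B →ₗ[A] B, (∀ x, p x ∈ N) ∧ ∀ x ∈ N, p x = x := by
    refine ⟨N'.subtype ∘ₗ Submodule.projectionOnto N' K hK, fun x => ?_, fun x hx => ?_⟩
    · exact (Submodule.projectionOnto N' K hK x).2
    · have := Submodule.projectionOnto_apply_left hK (⟨x, hx⟩ : N')
      exact congrArg Subtype.val this
  have hpa : ∀ a x, p (ι a * x) = ι a * p x := fun a x => p.map_smul a x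
  let P : B → B := fun x => ↑n⁻¹ * ∑ g, (↑(u g)⁻¹ : B) * p (u g * x)
  have hPadd : ∀ x y, P (x + y) = P x + P y := by
    intro x y
    simp only [P, mul_add, map_add, Finset.sum_add_distrib]
  have hPι : ∀ a x, P (ι a * x) = ι a * P x := by
    intro a x
    simp only [P]
    rw [← mul_assoc (ι a), ← hnc, mul_assoc, Finset.mul_sum (f := fun g => (↑(u g)⁻¹ : B) * p (u g * x))]
    congr 1
    refine Finset.sum_congr rfl fun g _ => ?_
    rw [← mul_assoc (u g : B), hB.u_comm, mul_assoc, hpa, ← mul_assoc, ← mul_assoc]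
    congr 1
    rw [Units.inv_mul_eq_iff_eq_mul, ← mul_assoc, hB.u_comm, Units.mul_inv_cancel_right]
  have hPu : ∀ h x, P (u h * x) = u h * P x := by
    intro h x
    simp only [P]
    rw [← mul_assoc (u h : B), ← hnc, mul_assoc, Finset.mul_sum (f := fun g => (↑(u g)⁻¹ : B) * p (u g * x))]
    congr 1
    refine Fintype.sum_equiv (Equiv.mulRight h) _ _ fun g => ?_
    rw [← mul_assoc (u g : B), hB.u_mul, mul_assoc, hpa, ← mul_assoc, ← mul_assoc]
    simp only [Equiv.coe_mulRight]
    congr 1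
    rw [Units.inv_mul_eq_iff_eq_mul, ← mul_assoc, hB.u_mul, Units.mul_inv_cancel_right]
  have hPsum : ∀ (f : G → B), P (∑ g, f g) = ∑ g, P (f g) := fun f =>
    map_sum (AddMonoidHom.mk' P hPadd) f _
  have hPB : ∀ b x, P (b * x) = b * P x := by
    intro b x
    obtain ⟨c, hc, -⟩ := hB.free b
    rw [hc, Finset.sum_mul, hPsum, Finset.sum_mul]
    refine Finset.sum_congr rfl fun g _ => ?_
    rw [mul_assoc, hPι, hPu, mul_assoc]
  have hPN : ∀ x, P x ∈ N := fun x =>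
    N.smul_mem _ (N.sum_mem fun g _ => N.smul_mem _ (hpN _))
  let Q : B →ₗ[B] N :=
    { toFun := fun x => ⟨P x, hPN x⟩
      map_add' := fun x y => Subtype.ext (hPadd x y)
      map_smul' := fun b x => Subtype.ext (hPB b x) }
  refine ⟨LinearMap.ker Q, LinearMap.isCompl_of_proj (f := Q) fun x => Subtype.ext ?_⟩
  change P x = x
  have : ∀ g, (↑(u g)⁻¹ : B) * p (u g * x) = x := fun g => by
    rw [hpid (u g * x) (N.smul_mem (u g : B) x.2), Units.inv_mul_cancel_left]
  simp only [P, this, Finset.sum_const, Finset.card_univ, nsmul_eq_mul]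
  rw [← hn', Units.inv_mul_cancel_left]

theorem cp_bwd
    {A : Type u} [Ring A] {G : Type v} [Group G] [Fintype G]
    (D : CrossedSystem A G) (B : Type w) [Ring B] (ι : A →+* B) (u : G → Bˣ)
    (hB : IsCrossedProduct D B ι u)
    (hS : IsSemisimpleRing B) : IsSemisimpleRing A := by
  choose c hc huniq using hB.free
  have hc1 : ∀ (b : B) (d : G → A), b = ∑ g, ι (d g) * u g → c b 1 = d 1 := fun b d h => by
    rw [huniq b d h]
  have hadd : ∀ x y, c (x + y) 1 = c x 1 + c y 1 := fun x y => by
    refine hc1 _ (fun g => c x g + c y g) ?_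
    simp only [map_add, add_mul, Finset.sum_add_distrib]
    rw [← hc x, ← hc y]
  have hmul : ∀ a x, c (ι a * x) 1 = a * c x 1 := fun a x => by
    refine hc1 _ (fun g => a * c x g) ?_
    simp only [map_mul, mul_assoc, ← Finset.mul_sum]
    rw [← hc x]
  have hmulr : ∀ x a, c (x * ι a) 1 = c x 1 * a := fun x a => by
    have h := hc1 (x * ι a) (fun g => c x g * D.φ g a) (by
      conv_lhs => rw [hc x]
      simp only [map_mul, mul_assoc, Finset.sum_mul, hB.u_comm])
    rw [h, D.φ_one]; rfl
  have hι : ∀ a, c (ι a) 1 = a := fun a => by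
    classical
    refine (hc1 (ι a) (fun g => if g = 1 then a else 0) ?_).trans (if_pos rfl)
    rw [Finset.sum_eq_single 1]
    · simp [hB.u_one]
    · intro g _ hg; simp [hg]
    · simp
  refine (isSemisimpleModule_iff A A).mpr ⟨fun I => ?_⟩
  let J : Submodule B B := Submodule.span B (ι '' I)
  have hJ' : ∀ x ∈ J, ∀ b, c (b * x) 1 ∈ I := by
    intro x hx
    induction hx using Submodule.span_induction with
    | mem x h =>
      obtain ⟨i, hi, rfl⟩ := h
      intro b
      rw [hmulr]
      exact I.smul_mem _ hi
    | zero => intro b; rw [mul_zero, ← map_zero ι, hι]; exact I.zero_mem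
    | add x y _ _ h1 h2 => intro b; rw [mul_add, hadd]; exact I.add_mem (h1 b) (h2 b)
    | smul b x hx h => intro b'; rw [smul_eq_mul, ← mul_assoc]; exact h _
  have hJ : ∀ x ∈ J, c x 1 ∈ I := fun x hx => by simpa using hJ' x hx 1
  obtain ⟨K, hK⟩ := exists_isCompl J
  let p := Submodule.projectionOnto J K hK
  have hpι : ∀ i ∈ I, ι i * (p 1 : B) = ι i := by
    intro i hi
    have h1 := Submodule.projectionOnto_apply_left hK
      (⟨ι i, Submodule.subset_span ⟨i, hi, rfl⟩⟩ : J)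
    have h2 : p (ι i • (1 : B)) = ι i • p 1 := p.map_smul _ _
    rw [smul_eq_mul, mul_one] at h2
    have h3 := h2.symm.trans h1
    exact congrArg Subtype.val h3
  have he : c (p 1 : B) 1 ∈ I := hJ _ (p 1).2
  let Q : A →ₗ[A] I := LinearMap.toSpanSingleton A I ⟨_, he⟩
  refine ⟨LinearMap.ker Q, LinearMap.isCompl_of_proj (f := Q) fun x => Subtype.ext ?_⟩
  change (x : A) * c (p 1 : B) 1 = x
  rw [← hmul, hpι _ x.2, hι]

/-- Let `G` be a finite group acting on the ring `A` via the datum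
`(φ, ω)`, with `|G|` invertible in `A`.  Then `A` is semi-simple if and only if the
crossed product `A[G, (φ, ω)]` is semi-simple. -/
theorem isSemisimpleRing_iff_isSemisimpleRing_crossedProduct
    {A : Type u} [Ring A] {G : Type v} [Group G] [Fintype G]
    (D : CrossedSystem A G) (B : Type w) [Ring B] (ι : A →+* B) (u : G → Bˣ)
    (hB : IsCrossedProduct D B ι u) (hn : IsUnit ((Fintype.card G : ℕ) : A)) :
    IsSemisimpleRing A ↔ IsSemisimpleRing B :=
  ⟨cp_fwd D B ι u hB hn, cp_bwd D B ι u hB⟩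
end

section
/- Let A be a ring and G a finite group acting on A via a datum (φ, ω), with |G| invertible in A. Then A is left hereditary if and only if the crossed product A[G,(φ,ω)] is left hereditary. -/
/-!
Statement 6: For a finite group `G` acting on a ring `A` via a datum `(φ, ω)` with
`|G|` invertible in `A`, the ring `A` is left hereditary if and only if the crossed
product `A[G, (φ, ω)]` is left hereditary.
-/

universe u v w

/-- A ring is left hereditary if every left ideal is projective. -/
def LeftHereditary (R : Type u) [Ring R] : Prop :=
  ∀ I : Ideal R, Module.Projective R ↥I

theorem LH.proj_of_inj {A : Type*} [Ring A] (hA : LeftHereditary A) (n : ℕ) :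
    ∀ (M : Type w) [AddCommGroup M] [Module A M] (f : M →ₗ[A] (Fin n → A)),
      Function.Injective f → Module.Projective A M := by
  induction n with
  | zero =>
    intro M _ _ f hf
    have : Subsingleton M := hf.subsingleton
    infer_instance
  | succ n ih =>
    intro M _ _ f hf
    let p : M →ₗ[A] A := (LinearMap.proj 0).comp f
    have hI : Module.Projective A (LinearMap.range p) := hA (LinearMap.range p)
    obtain ⟨s, hs⟩ := Module.projective_lifting_property p.rangeRestrict LinearMap.id
      p.surjective_rangeRestrict
    have hs' : ∀ x, p.rangeRestrict (s x) = x := fun x => LinearMap.congr_fun hs x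
    let q : LinearMap.ker p →ₗ[A] (Fin n → A) :=
      (LinearMap.funLeft A A Fin.succ).comp (f.comp (LinearMap.ker p).subtype)
    have hq : Function.Injective q := by
      intro x y hxy
      apply Subtype.ext
      apply hf
      funext i
      refine Fin.cases ?_ (fun j => ?_) i
      · have hx : p x = 0 := x.2
        have hy : p y = 0 := y.2
        exact hx.trans hy.symm
      · exact congrFun hxy j
    have hK : Module.Projective A (LinearMap.ker p) := ih _ q hq
    let r : M →ₗ[A] LinearMap.ker p :=
      LinearMap.codRestrict (LinearMap.ker p) (LinearMap.id - s.comp p.rangeRestrict) (by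
        intro m
        have h : p (s (p.rangeRestrict m)) = p m :=
          congrArg Subtype.val (hs' (p.rangeRestrict m))
        simp [h])
    refine Module.Projective.of_split (M := LinearMap.ker p × LinearMap.range p)
      (r.prod p.rangeRestrict) ((LinearMap.ker p).subtype.coprod s) ?_
    ext m
    simp [r]

theorem LH.forward
    {A : Type u} [Ring A] {G : Type v} [Group G] [Fintype G]
    (D : CrossedSystem A G) (B : Type w) [Ring B] (ι : A →+* B) (u : G → Bˣ)
    (hB : IsCrossedProduct D B ι u) (hn : IsUnit ((Fintype.card G : ℕ) : A))
    [Module A B] [IsScalarTower A B B] (hsm : ∀ (a : A) (b : B), a • b = ι a * b)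
    (e : B ≃ₗ[A] (G → A)) (hA : LeftHereditary A) : LeftHereditary B := by
  intro I
  have hP : Module.Projective A I := by
    refine LH.proj_of_inj hA (Fintype.card G) I
      ((LinearMap.funLeft A A (Fintype.equivFin G).symm).comp
        (e.toLinearMap.comp (I.subtype.restrictScalars A))) ?_
    refine (LinearMap.funLeft_injective_of_surjective A A _
      (Fintype.equivFin G).symm.surjective).comp (e.injective.comp Subtype.val_injective)
  let π : (I →₀ B) →ₗ[B] I := Finsupp.linearCombination B id
  have hπ : Function.Surjective π := Finsupp.linearCombination_id_surjective B I
  obtain ⟨s, hs⟩ := Module.projective_lifting_property (π.restrictScalars A) LinearMap.id hπ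
  have hs' : ∀ x, π (s x) = x := fun x => LinearMap.congr_fun hs x
  have hnB : IsUnit ((Fintype.card G : ℕ) : B) := by simpa using hn.map ι
  obtain ⟨ν, hν⟩ := hnB
  have hνc : ∀ b : B, (↑ν⁻¹ : B) * b = b * ↑ν⁻¹ := by
    intro b
    have : Commute (ν : B) b := by rw [hν]; exact Nat.cast_commute _ _
    exact this.units_inv_left
  have hsmI : ∀ (a : A) (x : I), ι a • x = a • x := by
    intro a x
    apply Subtype.ext
    simp [hsm]
  have hsmF : ∀ (a : A) (x : I →₀ B), ι a • x = a • x := by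
    intro a x
    ext
    simp [hsm]
  have hsι : ∀ (a : A) (x : I), s (ι a • x) = ι a • s x := by
    intro a x
    rw [hsmI, map_smul, hsmF]
  let t0 : I → (I →₀ B) := fun x => ∑ g : G, (↑(u g)⁻¹ : B) • s ((u g : B) • x)
  have ht0add : ∀ x y, t0 (x + y) = t0 x + t0 y := by
    intro x y
    simp [t0, smul_add, Finset.sum_add_distrib]
  have ht0ι : ∀ (a : A) x, t0 (ι a • x) = ι a • t0 x := by
    intro a x
    simp only [t0, Finset.smul_sum]
    refine Finset.sum_congr rfl fun g _ => ?_
    rw [smul_smul, hB.u_comm, mul_smul, hsι, smul_smul, smul_smul]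
    congr 1
    rw [Units.inv_mul_eq_iff_eq_mul, ← mul_assoc, hB.u_comm, mul_assoc, Units.mul_inv, mul_one]
  have ht0u : ∀ (h : G) x, t0 ((u h : B) • x) = (u h : B) • t0 x := by
    intro h x
    simp only [t0, Finset.smul_sum]
    refine Fintype.sum_equiv (Equiv.mulRight h) _ _ fun g => ?_
    simp only [Equiv.coe_mulRight]
    rw [smul_smul, hB.u_mul, mul_smul, hsι, smul_smul, smul_smul]
    congr 1
    rw [Units.inv_mul_eq_iff_eq_mul, ← mul_assoc, hB.u_mul, mul_assoc, Units.mul_inv, mul_one]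
  have ht0 : ∀ (b : B) x, t0 (b • x) = b • t0 x := by
    intro b x
    obtain ⟨c, hc, -⟩ := hB.free b
    let T : I →+ (I →₀ B) := AddMonoidHom.mk' t0 ht0add
    have hT : ∀ x, t0 x = T x := fun _ => rfl
    rw [hc, Finset.sum_smul, Finset.sum_smul, hT, map_sum]
    refine Finset.sum_congr rfl fun g _ => ?_
    rw [← hT, mul_smul, ht0ι, ht0u, mul_smul]
  let t : I →ₗ[B] (I →₀ B) :=
    { toFun := fun x => (↑ν⁻¹ : B) • t0 x
      map_add' := fun x y => by rw [ht0add, smul_add]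
      map_smul' := fun b x => by
        rw [ht0, smul_smul, hνc, mul_smul]; rfl }
  refine Module.Projective.of_split t π ?_
  refine LinearMap.ext fun x => ?_
  change π ((↑ν⁻¹ : B) • ∑ g : G, (↑(u g)⁻¹ : B) • s ((u g : B) • x)) = x
  simp only [map_smul, map_sum, hs', smul_smul, Units.inv_mul, one_smul]
  rw [Finset.sum_const, Finset.card_univ, ← Nat.cast_smul_eq_nsmul B, ← hν, smul_smul,
    Units.inv_mul, one_smul]

theorem LH.backward
    {A : Type u} [Ring A] {G : Type v} [Group G] [Fintype G]
    (D : CrossedSystem A G) (B : Type w) [Ring B] (ι : A →+* B) (u : G → Bˣ)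
    (hB : IsCrossedProduct D B ι u)
    [Module A B] [IsScalarTower A B B] (hsm : ∀ (a : A) (b : B), a • b = ι a * b)
    (e : B ≃ₗ[A] (G → A)) (he : ∀ c : G → A, e (∑ g : G, ι (c g) * u g) = c)
    (hH : LeftHereditary B) : LeftHereditary A := by
  classical
  intro I
  let J : Ideal B := Ideal.span (ι '' (I : Set A))
  have hJ : Module.Projective B J := hH J
  have hAB : Module.Free A B := Module.Free.of_equiv e.symm
  have hJA : Module.Projective A J := by
    obtain ⟨s, hs⟩ := Module.projective_lifting_property
      (Finsupp.linearCombination B (id : J → J)) LinearMap.id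
      (Finsupp.linearCombination_id_surjective B J)
    refine Module.Projective.of_split (s.restrictScalars A)
      ((Finsupp.linearCombination B (id : J → J)).restrictScalars A) ?_
    ext x
    exact congrArg Subtype.val (LinearMap.congr_fun hs x)
  have key : ∀ (b : B) (x : A), e (b * ι x) 1 = e b 1 * x := by
    intro b x
    obtain ⟨c, hc, -⟩ := hB.free b
    have h1 : b * ι x = ∑ g : G, ι (c g * D.φ g x) * u g := by
      rw [hc, Finset.sum_mul]
      refine Finset.sum_congr rfl fun g _ => ?_
      rw [mul_assoc, hB.u_comm, map_mul, mul_assoc]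
    rw [h1, he (fun g => c g * D.φ g x), hc, he]
    simp [D.φ_one]
  have hmem : ∀ y ∈ J, ∀ b : B, e (b * y) 1 ∈ I := by
    intro y hy
    refine Submodule.span_induction (p := fun y _ => ∀ b : B, e (b * y) 1 ∈ I)
      ?_ ?_ ?_ ?_ hy
    · rintro _ ⟨x, hx, rfl⟩ b
      rw [key]
      exact I.mul_mem_left _ hx
    · intro b
      simp
    · intro y z _ _ h1 h2 b
      rw [mul_add, map_add]
      exact I.add_mem (h1 b) (h2 b)
    · intro a y _ h b
      rw [smul_eq_mul, ← mul_assoc]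
      exact h _
  let r : J →ₗ[A] I := LinearMap.codRestrict I
    ((LinearMap.proj 1).comp (e.toLinearMap.comp (J.subtype.restrictScalars A))) (by
      intro y
      have := hmem y y.2 1
      rwa [one_mul] at this)
  let i : I →ₗ[A] J :=
    { toFun := fun x => ⟨ι x, Ideal.subset_span ⟨x, x.2, rfl⟩⟩
      map_add' := fun x y => by apply Subtype.ext; simp
      map_smul' := fun a x => by apply Subtype.ext; simp [hsm] }
  refine Module.Projective.of_split i r ?_
  refine LinearMap.ext fun x => Subtype.ext ?_
  change e (ι x) 1 = x
  have h1 := key 1 x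
  have h2 : e 1 1 = (1 : A) := by
    have : (1 : B) = ∑ g : G, ι ((Pi.single 1 1 : G → A) g) * u g := by
      rw [Finset.sum_eq_single 1]
      · simp [hB.u_one]
      · intro g _ hg
        simp [hg]
      · simp
    rw [this, he]
    simp
  rwa [one_mul, h2, one_mul] at h1

/-- Let `G` be a finite group acting on the ring `A` via the datum
`(φ, ω)`, with `|G|` invertible in `A`.  Then `A` is left hereditary if and only if
the crossed product `A[G, (φ, ω)]` is left hereditary. -/
theorem leftHereditary_iff_leftHereditary_crossedProduct
    {A : Type u} [Ring A] {G : Type v} [Group G] [Fintype G]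
    (D : CrossedSystem A G) (B : Type w) [Ring B] (ι : A →+* B) (u : G → Bˣ)
    (hB : IsCrossedProduct D B ι u) (hn : IsUnit ((Fintype.card G : ℕ) : A)) :
    LeftHereditary A ↔ LeftHereditary B := by
  let _ : Module A B := Module.compHom B ι
  have hsm : ∀ (a : A) (b : B), a • b = ι a * b := fun _ _ => rfl
  have : IsScalarTower A B B := ⟨fun a b c => by
    rw [hsm, hsm, smul_eq_mul, smul_eq_mul, mul_assoc]⟩
  let f : (G → A) →ₗ[A] B :=
    { toFun := fun c => ∑ g : G, ι (c g) * u g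
      map_add' := fun c d => by simp [add_mul, Finset.sum_add_distrib]
      map_smul' := fun a c => by simp [hsm, Finset.mul_sum, mul_assoc] }
  have hf : Function.Bijective f := by
    constructor
    · intro c d h
      obtain ⟨x, -, hx⟩ := hB.free (f c)
      exact (hx c rfl).trans (hx d h).symm
    · intro b
      obtain ⟨c, hc, -⟩ := hB.free b
      exact ⟨c, hc.symm⟩
  let e := (LinearEquiv.ofBijective f hf).symm
  have he : ∀ c : G → A, e (∑ g : G, ι (c g) * u g) = c := fun c =>
    (LinearEquiv.ofBijective f hf).symm_apply_apply c
  exact ⟨LH.forward D B ι u hB hn hsm e, LH.backward D B ι u hB hsm e he⟩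
end

section
/- Let A be a ring, G a finite group acting on A via a datum (φ, ω), and P a G-invariant left A-module: for each g ∈ G there is an additive automorphism α_g : P → P with α_g(a·p) = φ_g(a)·α_g(p) for all a ∈ A, p ∈ P, and α_e = id. Define ψ_g : End_A(P) → End_A(P) by ψ_g(ρ) = α_g ∘ ρ ∘ α_g⁻¹, and ξ_{f,g} := λ_{ω_{f,g}⁻¹} ∘ α_f ∘ α_g ∘ α_{fg}⁻¹, where λ_b(p) = b·p. Then each ψ_g is a ring automorphism of End_A(P), each ξ_{f,g} is an A-linear automorphism of P (hence a unit of End_A(P)), and (ψ, ξ) satisfies the axioms of an action of G on the ring End_A(P): ψ_{g₁}(ψ_{g₂}(ρ)) = ξ_{g₁,g₂} ∘ ψ_{g₁g₂}(ρ) ∘ ξ_{g₁,g₂}⁻¹, ψ_e = id, ξ_{g,e} = id = ξ_{e,g}, and ψ_f(ξ_{g,h}) ∘ ξ_{f,gh} = ξ_{f,g} ∘ ξ_{fg,h} for all f, g, h ∈ G. -/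
/-!
Statement 7: Let `G` be a finite group acting on a ring `A` via a datum `(φ, ω)` and
let `P` be a `G`-invariant left `A`-module, i.e. for each `g ∈ G` there is an
additive automorphism `α_g` of `P` with `α_g(a·p) = φ_g(a)·α_g(p)` and `α_e = id`.
Then the formulas `ψ_g(ρ) = α_g ∘ ρ ∘ α_g⁻¹` and
`ξ_{f,g} = λ_{ω_{f,g}⁻¹} ∘ α_f ∘ α_g ∘ α_{fg}⁻¹` define an action `(ψ, ξ)` of `G`
on the endomorphism ring `End_A(P)`: each `ψ_g` is a ring automorphism of
`End_A(P)`, each `ξ_{f,g}` is an `A`-linear automorphism of `P` (a unit of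
`End_A(P)`), and the axioms of an action with a system of factors hold.
-/

universe u v w


section Helpers

variable {A : Type u} [Ring A] {G : Type v} [Group G]
    (D : CrossedSystem A G) {P : Type w} [AddCommGroup P] [Module A P]
    (α : G → P ≃+ P)
    (hα : ∀ (g : G) (a : A) (p : P), α g (a • p) = D.φ g a • α g p)

theorem aux_symm_smul
    (hα : ∀ (g : G) (a : A) (p : P), α g (a • p) = D.φ g a • α g p) (g : G) (a : A) (p : P) :
    (α g).symm (a • p) = (D.φ g).symm a • (α g).symm p := by
  apply (α g).injective
  simp [hα]

/-- Conjugation on endomorphisms. -/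
def auxPsi
    (hα : ∀ (g : G) (a : A) (p : P), α g (a • p) = D.φ g a • α g p) (g : G) :
    Module.End A P ≃+* Module.End A P where
  toFun ρ :=
    { toFun := fun p => α g (ρ ((α g).symm p))
      map_add' := by intro x y; simp
      map_smul' := by intro a x; simp [aux_symm_smul D α hα, hα] }
  invFun ρ :=
    { toFun := fun p => (α g).symm (ρ (α g p))
      map_add' := by intro x y; simp
      map_smul' := by intro a x; simp [aux_symm_smul D α hα, hα] }
  left_inv ρ := by ext p; simp
  right_inv ρ := by ext p; simp
  map_mul' ρ σ := by ext p; simp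
  map_add' ρ σ := by ext p; simp

theorem auxPsi_apply
    (hα : ∀ (g : G) (a : A) (p : P), α g (a • p) = D.φ g a • α g p) (g : G)
    (ρ : Module.End A P) (p : P) : auxPsi D α hα g ρ p = α g (ρ ((α g).symm p)) := rfl

/-- The factor as a linear automorphism. -/
def auxXi
    (hα : ∀ (g : G) (a : A) (p : P), α g (a • p) = D.φ g a • α g p) (f g : G) :
    P ≃ₗ[A] P where
  toFun p := (((D.ω f g)⁻¹ : Aˣ) : A) • α f (α g ((α (f * g)).symm p))
  map_add' x y := by simp
  map_smul' a x := by
    simp [aux_symm_smul D α hα, hα, D.compat, smul_smul, mul_assoc]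
  invFun p := α (f * g) ((α g).symm ((α f).symm ((D.ω f g : A) • p)))
  left_inv p := by simp [smul_smul]
  right_inv p := by simp [smul_smul]

/-- The factor as a unit. -/
def auxXiU
    (hα : ∀ (g : G) (a : A) (p : P), α g (a • p) = D.φ g a • α g p) (f g : G) :
    (Module.End A P)ˣ where
  val := (auxXi D α hα f g).toLinearMap
  inv := (auxXi D α hα f g).symm.toLinearMap
  val_inv := by ext p; simp
  inv_val := by ext p; simp

theorem auxXiU_apply
    (hα : ∀ (g : G) (a : A) (p : P), α g (a • p) = D.φ g a • α g p) (f g : G) (p : P) :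
    (auxXiU D α hα f g : Module.End A P) p
      = (((D.ω f g)⁻¹ : Aˣ) : A) • α f (α g ((α (f * g)).symm p)) := rfl

theorem auxXiU_inv_apply
    (hα : ∀ (g : G) (a : A) (p : P), α g (a • p) = D.φ g a • α g p) (f g : G) (p : P) :
    (((auxXiU D α hα f g)⁻¹ : (Module.End A P)ˣ) : Module.End A P) p
      = α (f * g) ((α g).symm ((α f).symm ((D.ω f g : A) • p))) := rfl

end Helpers

/-- Let `G` act on the ring `A` via the datum `(φ, ω)`, and let `P`
be a `G`-invariant left `A`-module, via additive automorphisms `α_g` satisfying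
`α_g (a • p) = φ_g a • α_g p` and `α_e = id`.  Then there is an action `(ψ, ξ)` of
`G` on the ring `End_A(P)` (i.e. a crossed system, consisting of ring automorphisms
`ψ_g` of `End_A(P)` and units `ξ_{f,g}` of `End_A(P)`, satisfying the compatibility,
normalization and cocycle conditions) given by the formulas
`ψ_g(ρ) = α_g ∘ ρ ∘ α_g⁻¹` and `ξ_{f,g} = λ_{ω_{f,g}⁻¹} ∘ α_f ∘ α_g ∘ α_{fg}⁻¹`. -/
theorem crossedSystem_end_of_invariant_module
    {A : Type u} [Ring A] {G : Type v} [Group G] [Finite G]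
    (D : CrossedSystem A G) (P : Type w) [AddCommGroup P] [Module A P]
    (α : G → P ≃+ P)
    (hα : ∀ (g : G) (a : A) (p : P), α g (a • p) = D.φ g a • α g p)
    (hα1 : α 1 = AddEquiv.refl P) :
    ∃ E : CrossedSystem (Module.End A P) G,
      (∀ (g : G) (ρ : Module.End A P) (p : P),
        E.φ g ρ p = α g (ρ ((α g).symm p))) ∧
      (∀ (f g : G) (p : P),
        (E.ω f g : Module.End A P) p
          = (((D.ω f g)⁻¹ : Aˣ) : A) • α f (α g ((α (f * g)).symm p))) := by
  refine ⟨{ φ := auxPsi D α hα, ω := auxXiU D α hα, compat := ?_, φ_one := ?_,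
            ω_one_right := ?_, ω_one_left := ?_, cocycle := ?_ },
          fun _ _ _ => rfl, fun _ _ _ => rfl⟩
  · intro g₁ g₂ ρ
    ext p
    have h := map_smul (auxPsi D α hα g₁ (auxPsi D α hα g₂ ρ)) (D.ω g₁ g₂ : A) p
    simp only [auxPsi_apply] at h
    simp only [Module.End.mul_apply, auxXiU_inv_apply, auxXiU_apply, auxPsi_apply,
      AddEquiv.symm_apply_apply]
    rw [h, smul_smul, Units.inv_mul, one_smul]
  · ext ρ p
    simp [auxPsi_apply, hα1]
  · intro g
    ext p
    simp [auxXiU_apply, hα1, D.ω_one_right]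
  · intro g
    ext p
    simp [auxXiU_apply, hα1, D.ω_one_left]
  · intro f g h
    ext p
    rw [Module.End.mul_apply, Module.End.mul_apply, auxXiU_apply D α hα f (g * h),
      auxXiU_apply D α hα (f * g) h, map_smul, map_smul, auxPsi_apply, auxXiU_apply,
      auxXiU_apply]
    simp only [AddEquiv.symm_apply_apply, hα, smul_smul, mul_assoc]
    congr 1
    have hc : Units.map (D.φ f : A →* A) (D.ω g h) * D.ω f (g * h)
        = D.ω f g * D.ω (f * g) h := Units.ext (D.cocycle f g h)
    have hc' := congrArg (fun x : Aˣ => ((x⁻¹ : Aˣ) : A)) hc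
    simp only [mul_inv_rev, Units.val_mul, ← map_inv, Units.coe_map] at hc'
    exact hc'
end

section
/- Let n ∈ ℕ and B = (b_{ij}) be an n × n matrix over the non-negative integers with b_{ii} > 0 for all i, and such that for i ≠ j, b_{ij} ≠ 0 if and only if b_{ji} ≠ 0. Let a = (a_1, …, a_n) be a vector of positive integers and a' = B·a. Consider the assertions: (1) a'_i ≤ 2·a_i for all i; (2) for each i, either (b_{ii} ≤ 2 and b_{ij} = 0 for all j ≠ i), or there is a unique index i' ≠ i such that a_i = a_{i'}, b_{ii} = b_{ii'} = b_{i'i} = b_{i'i'} = 1 and b_{ij} = 0 for all j ∉ {i, i'}; (3) Σ_{j=1}^n b_{ij} ≤ 2 for all i. Then (1) ⇔ (2), (2) ⇒ (3), and if all a_i are equal, then (3) ⇒ (1). -/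
/-!
Statement 11: the combinatorial lemma on matrices with non-negative integer entries.
-/

/-- Let `b` be an `n × n` matrix over `ℕ` with positive diagonal
entries, such that for `i ≠ j` the entry `b i j` vanishes iff `b j i` does.  Let `a`
be a vector of positive natural numbers and `a' = B·a` (so `a' i = Σ_j b i j * a j`).
Consider the assertions:
(1) `a' i ≤ 2 * a i` for all `i`;
(2) for each `i`, either `b i i ≤ 2` and `b i j = 0` for all `j ≠ i`, or there is a
    unique index `i' ≠ i` with `a i = a i'`,
    `b i i = b i i' = b i' i = b i' i' = 1` and `b i j = 0` for `j ∉ {i, i'}`;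
(3) `Σ_j b i j ≤ 2` for all `i`.
Then (1) ↔ (2), (2) → (3), and if all `a i` are equal, (3) → (1). -/
theorem matrix_two_generation_lemma (n : ℕ) (b : Fin n → Fin n → ℕ) (a : Fin n → ℕ)
    (hdiag : ∀ i, 0 < b i i)
    (hsymm : ∀ i j, i ≠ j → (b i j ≠ 0 ↔ b j i ≠ 0))
    (hpos : ∀ i, 0 < a i) :
    ((∀ i, ∑ j, b i j * a j ≤ 2 * a i) ↔
      (∀ i, (b i i ≤ 2 ∧ ∀ j, j ≠ i → b i j = 0) ∨
        (∃! i' : Fin n, i' ≠ i ∧ a i = a i' ∧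
          b i i = 1 ∧ b i i' = 1 ∧ b i' i = 1 ∧ b i' i' = 1 ∧
          ∀ j, j ≠ i → j ≠ i' → b i j = 0))) ∧
    ((∀ i, (b i i ≤ 2 ∧ ∀ j, j ≠ i → b i j = 0) ∨
        (∃! i' : Fin n, i' ≠ i ∧ a i = a i' ∧
          b i i = 1 ∧ b i i' = 1 ∧ b i' i = 1 ∧ b i' i' = 1 ∧
          ∀ j, j ≠ i → j ≠ i' → b i j = 0)) →
      ∀ i, ∑ j, b i j ≤ 2) ∧
    ((∀ i j, a i = a j) → (∀ i, ∑ j, b i j ≤ 2) → ∀ i, ∑ j, b i j * a j ≤ 2 * a i) := by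
  have two : ∀ (f : Fin n → ℕ) (i j : Fin n), i ≠ j → f i + f j ≤ ∑ k, f k := by
    intro f i j h
    rw [← Finset.sum_pair h]
    exact Finset.sum_le_sum_of_subset (Finset.subset_univ _)
  have three : ∀ (f : Fin n → ℕ) (i j k : Fin n), i ≠ j → i ≠ k → j ≠ k →
      f i + (f j + f k) ≤ ∑ k, f k := by
    intro f i j k h h1 h2
    rw [← Finset.sum_pair h2, ← Finset.sum_insert (by simp [h, h1])]
    exact Finset.sum_le_sum_of_subset (Finset.subset_univ _)
  refine ⟨⟨?_, ?_⟩, ?_, ?_⟩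
  · intro H i
    by_cases hz : ∀ j, j ≠ i → b i j = 0
    · left
      refine ⟨?_, hz⟩
      have h1 := H i
      have h2 := Finset.single_le_sum (f := fun j => b i j * a j)
        (fun _ _ => Nat.zero_le _) (Finset.mem_univ i)
      exact Nat.le_of_mul_le_mul_right (h2.trans h1) (hpos i)
    · right
      have key : ∀ i j, i ≠ j → b i j ≠ 0 → b i i = 1 ∧ b i j * a j ≤ a i := by
        intro i j hij hb
        have h1 := (two (fun j => b i j * a j) i j hij).trans (H i)
        have hp : 0 < b i j * a j := Nat.mul_pos (Nat.pos_of_ne_zero hb) (hpos j)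
        have hd := hdiag i
        have h2 : b i i < 2 := by
          apply Nat.lt_of_mul_lt_mul_right (a := a i)
          omega
        have h3 : b i i = 1 := by omega
        rw [h3] at h1
        exact ⟨h3, by omega⟩
      push Not at hz
      obtain ⟨j, hji, hb⟩ := hz
      have hb2 := (hsymm i j hji.symm).1 hb
      obtain ⟨d1, e1⟩ := key i j hji.symm hb
      obtain ⟨d2, e2⟩ := key j i hji hb2
      have f1 : a j ≤ b i j * a j := Nat.le_mul_of_pos_left _ (Nat.pos_of_ne_zero hb)
      have f2 : a i ≤ b j i * a i := Nat.le_mul_of_pos_left _ (Nat.pos_of_ne_zero hb2)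
      have ea : a i = a j := by omega
      have g1 : b i j = 1 := Nat.eq_of_mul_eq_mul_right (hpos j) (by omega)
      have g2 : b j i = 1 := Nat.eq_of_mul_eq_mul_right (hpos i) (by omega)
      have hz : ∀ k, k ≠ i → k ≠ j → b i k = 0 := by
        intro k hki hkj
        have h1 := (three (fun j => b i j * a j) i j k hji.symm hki.symm hkj.symm).trans (H i)
        simp only [d1, g1] at h1
        have h0 : b i k * a k = 0 := by omega
        exact (Nat.mul_eq_zero.1 h0).resolve_right (hpos k).ne'
      refine ⟨j, ⟨hji, ea, d1, g1, g2, d2, hz⟩, ?_⟩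
      rintro k ⟨hki, -, -, hk, -⟩
      by_contra hkj
      have := hz k hki hkj
      omega
  · intro H i
    rcases H i with ⟨h, hz⟩ | ⟨j, ⟨hji, ea, d1, g1, -, -, hz⟩, -⟩
    · rw [Fintype.sum_eq_single i (fun j hj => by simp [hz j hj])]
      exact Nat.mul_le_mul_right _ h
    · rw [Fintype.sum_eq_add i j hji.symm (fun k hk => by simp [hz k hk.1 hk.2]), d1, g1]
      omega
  · intro H i
    rcases H i with ⟨h, hz⟩ | ⟨j, ⟨hji, ea, d1, g1, -, -, hz⟩, -⟩
    · rw [Fintype.sum_eq_single i (fun j hj => hz j hj)]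
      exact h
    · rw [Fintype.sum_eq_add i j hji.symm (fun k hk => hz k hk.1 hk.2), d1, g1]
  · intro ha H i
    have : ∑ j, b i j * a j = (∑ j, b i j) * a i := by
      rw [Finset.sum_mul]
      exact Finset.sum_congr rfl (fun j _ => by rw [ha j i])
    rw [this]
    exact Nat.mul_le_mul_right _ (H i)
end

section
/- Let A be a semilocal ring with Jacobson radical J, and let G be a finite group acting on A via a datum (φ, ω) with |G| invertible in A. Then the crossed product A[G,(φ,ω)] is semilocal and its Jacobson radical equals J[G,(φ,ω)] = {Σ_{g∈G} a_g[g] : a_g ∈ J for all g}, i.e. the set of elements all of whose coefficients lie in J. -/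
/-!
Statement 14: Let `A` be a semilocal ring with Jacobson radical `J`, and let `G` be
a finite group acting on `A` via a datum `(φ, ω)` with `|G|` invertible in `A`.
Then the crossed product `A[G, (φ, ω)]` is semilocal and its Jacobson radical is
`J[G, (φ, ω)]`, i.e. the set of elements all of whose coefficients lie in `J`.
-/

universe u v w


/-- The Jacobson radical of a ring: the intersection of its maximal left ideals. -/
def jacobsonRadical (R : Type*) [Ring R] : Ideal R :=
  sInf {I : Ideal R | I.IsMaximal}

/-- A ring `R` is semilocal if `R/rad(R)` is artinian. -/
def IsSemilocalRing (R : Type*) [Ring R] : Prop :=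
  IsArtinian R (R ⧸ jacobsonRadical R)

theorem jacobsonRadical_eq (R : Type*) [Ring R] : jacobsonRadical R = Ring.jacobson R :=
  (Ring.jacobson_eq_sInf_isMaximal R).symm

section CP

variable {A : Type u} [Ring A] {G : Type v} [Group G] [Fintype G]
  {D : CrossedSystem A G} {B : Type w} [Ring B] {ι : A →+* B} {u : G → Bˣ}

theorem cp_phi_mem (D : CrossedSystem A G) (g : G) {a : A} (ha : a ∈ Ring.jacobson A) :
    D.φ g a ∈ Ring.jacobson A := by
  haveI : RingHomSurjective (D.φ g : A →+* A) := ⟨(D.φ g).surjective⟩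
  exact Ring.le_comap_jacobson (D.φ g : A →+* A) ha

theorem cp_mul (hB : IsCrossedProduct D B ι u) (a c : A) (h g : G) :
    (ι a * u h) * (ι c * u g) = ι (a * D.φ h c * D.ω h g) * u (h * g) := by
  calc (ι a * u h) * (ι c * u g) = ι a * ((u h : B) * ι c) * u g := by simp only [mul_assoc]
    _ = ι a * ι (D.φ h c) * ((u h : B) * u g) := by rw [hB.u_comm]; simp only [mul_assoc]
    _ = _ := by rw [hB.u_mul]; simp only [map_mul, mul_assoc]

theorem cp_u_inv (hB : IsCrossedProduct D B ι u) (g : G) (a : A) :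
    ((u g)⁻¹ : Bˣ) * ι (D.φ g a) = ι a * ((u g)⁻¹ : Bˣ) := by
  rw [Units.inv_mul_eq_iff_eq_mul, ← mul_assoc, hB.u_comm, mul_assoc, Units.mul_inv, mul_one]

theorem cp_u_inv_omega (hB : IsCrossedProduct D B ι u) (g h : G) :
    ((u g)⁻¹ : Bˣ) * ι (D.ω g h) = u h * ((u (g * h))⁻¹ : Bˣ) := by
  rw [Units.inv_mul_eq_iff_eq_mul, ← mul_assoc, hB.u_mul, mul_assoc, Units.mul_inv, mul_one]

/-- The left ideal `J[G]`. -/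
def cpK (hB : IsCrossedProduct D B ι u) : Ideal B :=
  let S : AddSubmonoid B :=
    { carrier := {x | ∃ c : G → A, (∀ g, c g ∈ Ring.jacobson A) ∧ x = ∑ g : G, ι (c g) * u g}
      zero_mem' := ⟨0, fun _ => zero_mem _, by simp⟩
      add_mem' := by
        rintro _ _ ⟨c, hc, rfl⟩ ⟨d, hd, rfl⟩
        exact ⟨c + d, fun g => add_mem (hc g) (hd g), by
          simp [add_mul, Finset.sum_add_distrib]⟩ }
  have hS : ∀ (c : A), c ∈ Ring.jacobson A → ∀ g, ι c * u g ∈ S := by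
    classical
    intro c hc g
    refine ⟨Pi.single g c, fun h => ?_, ?_⟩
    · by_cases hh : h = g
      · subst hh; simpa using hc
      · simp [hh]
    · rw [Finset.sum_eq_single g]
      · simp
      · intro h _ hh; simp [hh]
      · simp
  { S with
    smul_mem' := by
      rintro b _ ⟨c, hc, rfl⟩
      obtain ⟨a, ha, -⟩ := hB.free b
      change b * _ ∈ S
      rw [ha, Finset.sum_mul]
      refine sum_mem fun h _ => ?_
      rw [Finset.mul_sum]
      refine sum_mem fun g _ => ?_
      rw [cp_mul hB]
      exact hS _ (Ideal.mul_mem_right _ _ (Ideal.mul_mem_left _ _ (cp_phi_mem D h (hc g)))) _ }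

theorem mem_cpK (hB : IsCrossedProduct D B ι u) (x : B) : x ∈ cpK hB ↔
    ∃ c : G → A, (∀ g, c g ∈ Ring.jacobson A) ∧ x = ∑ g : G, ι (c g) * u g := Iff.rfl

theorem cpK_single (hB : IsCrossedProduct D B ι u) {c : A} (hc : c ∈ Ring.jacobson A) (g : G) :
    ι c * u g ∈ cpK hB := by
  classical
  refine ⟨Pi.single g c, fun h => ?_, ?_⟩
  · by_cases hh : h = g
    · subst hh; simpa using hc
    · simp [hh]
  · rw [Finset.sum_eq_single g]
    · simp
    · intro h _ hh; simp [hh]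
    · simp

theorem cpK_le (hB : IsCrossedProduct D B ι u) : cpK hB ≤ Ring.jacobson B := by
  rw [Ring.jacobson_eq_sInf_isMaximal]
  refine le_sInf fun M hM => ?_
  by_contra hle
  have hM' : M.IsMaximal := hM
  have htop : M ⊔ cpK hB = ⊤ := hM'.out.2 _ (by
    refine lt_of_le_of_ne le_sup_left fun h => hle ?_
    rw [h]; exact le_sup_right)
  letI : Module A (B ⧸ M) := Module.compHom (B ⧸ M) ι
  have hsm : ∀ (a : A) (b : B), a • (Submodule.Quotient.mk b : B ⧸ M) =
    Submodule.Quotient.mk (ι a * b) := fun a b => rfl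
  have hsum : ∀ c : G → A, (Submodule.Quotient.mk (∑ g : G, ι (c g) * u g) : B ⧸ M) =
      ∑ g : G, c g • (Submodule.Quotient.mk (u g : B) : B ⧸ M) := by
    intro c
    rw [← Submodule.mkQ_apply, map_sum]; rfl
  have hfg : (⊤ : Submodule A (B ⧸ M)).FG := by
    refine Submodule.fg_def.2
      ⟨Set.range fun g => (Submodule.Quotient.mk (u g : B) : B ⧸ M), Set.finite_range _, ?_⟩
    rw [eq_top_iff]
    rintro v -
    obtain ⟨b, rfl⟩ := Submodule.Quotient.mk_surjective _ v
    obtain ⟨c, hc, -⟩ := hB.free b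
    rw [hc, hsum]
    exact sum_mem fun g _ => Submodule.smul_mem _ _ (Submodule.subset_span ⟨g, rfl⟩)
  have hbot := hfg.eq_bot_of_le_jacobson_smul (by
    rintro v -
    obtain ⟨b, rfl⟩ := Submodule.Quotient.mk_surjective _ v
    obtain ⟨m, hm, k, hk, rfl⟩ := Submodule.mem_sup.1 (htop ▸ Submodule.mem_top : b ∈ M ⊔ cpK hB)
    obtain ⟨c, hc, rfl⟩ := hk
    rw [Submodule.Quotient.mk_add, (Submodule.Quotient.mk_eq_zero M).2 hm, zero_add, hsum]
    exact sum_mem fun g _ => Submodule.smul_mem_smul (hc g) Submodule.mem_top)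
  have h1 : (Submodule.Quotient.mk (1 : B) : B ⧸ M) ∈ (⊤ : Submodule A (B ⧸ M)) :=
    Submodule.mem_top
  rw [hbot, Submodule.mem_bot, Submodule.Quotient.mk_eq_zero] at h1
  exact hM'.ne_top ((Ideal.eq_top_iff_one _).2 h1)

theorem cp_maschke (hB : IsCrossedProduct D B ι u) (hn : IsUnit ((Fintype.card G : ℕ) : A))
    (V : Type*) [AddCommGroup V] [Module B V] [Module A V]
    (hsm : ∀ (a : A) (v : V), a • v = ι a • v) [IsSemisimpleModule A V] :
    IsSemisimpleModule B V := by
  refine (isSemisimpleModule_iff B V).2 ⟨fun P => ?_⟩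
  let P' : Submodule A V :=
    { P.toAddSubmonoid with smul_mem' := fun a v hv => (hsm a v).symm ▸ P.smul_mem (ι a) hv }
  have hP' : ∀ v, v ∈ P' ↔ v ∈ P := fun _ => Iff.rfl
  obtain ⟨Q', hQ⟩ := exists_isCompl P'
  obtain ⟨π, hπ1, hπ2⟩ : ∃ π : V →ₗ[A] V, (∀ v, π v ∈ P) ∧ ∀ v ∈ P, π v = v := by
    refine ⟨P'.subtype ∘ₗ P'.projectionOnto Q' hQ, fun v => ?_, fun v hv => ?_⟩
    · exact (P'.projectionOnto Q' hQ v).2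
    · exact congrArg Subtype.val (Submodule.projectionOnto_apply_left hQ ⟨v, hv⟩)
  let N0 : V →+ V := ∑ g : G,
    (((DistribSMul.toAddMonoidHom V (((u g)⁻¹ : Bˣ) : B)).comp π.toAddMonoidHom).comp
      (DistribSMul.toAddMonoidHom V (u g : B)))
  have hN0 : ∀ v, N0 v = ∑ g : G, (((u g)⁻¹ : Bˣ) : B) • π ((u g : B) • v) := by
    intro v
    simp [N0]
  have hNa : ∀ (a : A) v, N0 (ι a • v) = ι a • N0 v := by
    intro a v
    rw [hN0, hN0, Finset.smul_sum]
    refine Finset.sum_congr rfl fun g _ => ?_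
    rw [smul_smul, hB.u_comm, mul_smul, ← hsm, map_smul, hsm, smul_smul, cp_u_inv hB, mul_smul]
  have hNu : ∀ (h : G) v, N0 ((u h : B) • v) = (u h : B) • N0 v := by
    intro h v
    rw [hN0, hN0, Finset.smul_sum]
    refine Fintype.sum_equiv (Equiv.mulRight h) _ _ fun g => ?_
    rw [smul_smul, hB.u_mul, mul_smul, ← hsm, map_smul, hsm, smul_smul, cp_u_inv_omega hB,
      mul_smul]
    rfl
  let N : V →ₗ[B] V :=
    { N0 with
      map_smul' := by
        intro b v
        change N0 (b • v) = b • N0 v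
        obtain ⟨c, hc, -⟩ := hB.free b
        rw [hc, Finset.sum_smul, Finset.sum_smul, map_sum]
        refine Finset.sum_congr rfl fun g _ => ?_
        rw [mul_smul, hNa, hNu, mul_smul] }
  have hN : ∀ v, N v = N0 v := fun _ => rfl
  have hNP : ∀ v, N v ∈ P := by
    intro v
    rw [hN, hN0]
    exact sum_mem fun g _ => P.smul_mem _ (hπ1 _)
  obtain ⟨n, hn⟩ := hn
  have hNn : ∀ v ∈ P, N v = ι n • v := by
    intro v hv
    rw [hN, hN0, hn]
    have : ∀ g ∈ Finset.univ, (((u g)⁻¹ : Bˣ) : B) • π ((u g : B) • v) = v := by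
      intro g _
      rw [hπ2 _ (P.smul_mem _ hv), smul_smul, Units.inv_mul, one_smul]
    rw [Finset.sum_congr rfl this]
    simp [Nat.cast_smul_eq_nsmul]
  have hinv : ∀ v : V, ι (n⁻¹ : Aˣ) • ι n • v = v := by
    intro v
    rw [smul_smul, ← map_mul, Units.inv_mul, map_one, one_smul]
  have hinv' : ∀ v : V, ι n • ι (n⁻¹ : Aˣ) • v = v := by
    intro v
    rw [smul_smul, ← map_mul, Units.mul_inv, map_one, one_smul]
  refine ⟨LinearMap.ker N, ?_, ?_⟩
  · rw [Submodule.disjoint_def]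
    intro v hv hk
    rw [LinearMap.mem_ker, hNn v hv] at hk
    rw [← hinv v, hk, smul_zero]
  · rw [codisjoint_iff, eq_top_iff]
    rintro v -
    refine Submodule.mem_sup.2 ⟨ι (n⁻¹ : Aˣ) • N v, P.smul_mem _ (hNP v),
      v - ι (n⁻¹ : Aˣ) • N v, ?_, by abel⟩
    rw [LinearMap.mem_ker, map_sub, hNn _ (P.smul_mem _ (hNP v)), hinv', sub_self]

theorem cp_quot_semisimple (hB : IsCrossedProduct D B ι u)
    (hA : IsArtinian A (A ⧸ Ring.jacobson A)) (hn : IsUnit ((Fintype.card G : ℕ) : A)) :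
    IsSemisimpleModule B (B ⧸ cpK hB) := by
  have hAs : IsSemisimpleModule A (A ⧸ Ring.jacobson A) :=
    (IsArtinian.isSemisimpleModule_iff_jacobson A _).2 (Module.jacobson_quotient_jacobson A A)
  letI : Module A (B ⧸ cpK hB) := Module.compHom _ ι
  have hsm : ∀ (a : A) (v : B ⧸ cpK hB), a • v = ι a • v := fun _ _ => rfl
  let f : G → (A ⧸ Ring.jacobson A) →ₗ[A] (B ⧸ cpK hB) := fun g =>
    Submodule.liftQ _ (LinearMap.toSpanSingleton A _ (Submodule.Quotient.mk (u g : B))) (by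
      intro a ha
      rw [LinearMap.mem_ker, LinearMap.toSpanSingleton_apply, hsm, ← Submodule.Quotient.mk_smul,
        Submodule.Quotient.mk_eq_zero]
      exact cpK_single hB ha g)
  have : IsSemisimpleModule A (B ⧸ cpK hB) := by
    refine isSemisimpleModule_of_isSemisimpleModule_submodule'
      (p := fun g => LinearMap.range (f g)) (fun g => IsSemisimpleModule.range _) ?_
    rw [eq_top_iff]
    rintro v -
    obtain ⟨b, rfl⟩ := Submodule.Quotient.mk_surjective _ v
    obtain ⟨c, hc, -⟩ := hB.free b
    rw [hc, ← Submodule.mkQ_apply, map_sum]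
    refine sum_mem fun g _ => Submodule.mem_iSup_of_mem g ⟨Submodule.Quotient.mk (c g), rfl⟩
  exact cp_maschke hB hn _ hsm

end CP

/-- Let `A` be a semilocal ring with Jacobson radical `J`, and
`G` a finite group acting on `A` via `(φ, ω)` with `|G|` invertible in `A`.  Then
the crossed product `B = A[G, (φ, ω)]` is semilocal, and its Jacobson radical is
`J[G, (φ, ω)] = {Σ_g a_g [g] | a_g ∈ J}`. -/
theorem crossedProduct_semilocal_and_radical
    {A : Type u} [Ring A] {G : Type v} [Group G] [Fintype G]
    (D : CrossedSystem A G) (B : Type w) [Ring B] (ι : A →+* B) (u : G → Bˣ)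
    (hB : IsCrossedProduct D B ι u)
    (hA : IsSemilocalRing A) (hn : IsUnit ((Fintype.card G : ℕ) : A)) :
    IsSemilocalRing B ∧
      ∀ x : B, x ∈ jacobsonRadical B ↔
        ∃ c : G → A, (∀ g, c g ∈ jacobsonRadical A) ∧ x = ∑ g : G, ι (c g) * u g := by
  rw [IsSemilocalRing, jacobsonRadical_eq] at hA
  have hss := cp_quot_semisimple hB hA hn
  have heq : Ring.jacobson B = cpK hB :=
    le_antisymm (Module.jacobson_le_of_eq_bot (IsSemisimpleModule.jacobson_eq_bot B _)) (cpK_le hB)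
  constructor
  · rw [IsSemilocalRing, jacobsonRadical_eq, heq]
    infer_instance
  · intro x
    rw [jacobsonRadical_eq, jacobsonRadical_eq, heq]
    exact mem_cpK hB x
end
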